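/- arXiv:0812.0062 — 4 statements merged into one kernel-verified Lean document; each statement's English description precedes it below -/
import Mathlib

section
/- Let Γ be a finite rooted tree and ⤳ a binary relation on its vertex set V satisfying the P-Enriques-diagram conditions (P1), (P2), (P3). Then there exist an integer d ≥ 2 and a d-weighting α of Γ whose induced proximity relation ⤳_α equals ⤳ if and only if the following two conditions hold: (a) the proximity index is non-decreasing, i.e. ind(r) ≥ ind(q) whenever r ⪰ q; and (b) for all vertices r, q with r ⤳ q, at most one child s ∈ r⁺ satisfies ¬(s ⤳ q). (This is the combinatorial form, via the paper's codification of d-dimensional toric constellations by d-weighted trees and the combinatorial proximity criterion, of the theorem: a P-Enriques diagram is induced by a toric constellation if and only if (a) and (b) hold.) -/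
/-- A finite rooted tree: a distinguished root, a parent map fixing the root,
and a depth function witnessing that iterating the parent map reaches the root. -/
structure PTree (V : Type) where
  root : V
  parent : V → V
  depth : V → ℕ
  parent_root : parent root = root
  depth_root : depth root = 0
  depth_eq : ∀ v, v ≠ root → depth v = depth (parent v) + 1

namespace PTree

variable {V : Type}

/-- `r ⪰ q` : the descendancy order (`q` lies on the path from `r` to the root). -/
def desc (T : PTree V) (r q : V) : Prop := ∃ k : ℕ, T.parent^[k] r = q

/-- `r ≻ q`. -/
def sdesc (T : PTree V) (r q : V) : Prop := T.desc r q ∧ r ≠ q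

/-- `r ∈ q⁺` : `r` is a child of `q`. -/
def child (T : PTree V) (r q : V) : Prop := T.parent r = q ∧ r ≠ T.root

/-- `w` is a d-weighting of `T` : each non-root vertex gets a weight in `{1,…,d}`,
and distinct children of a common vertex get distinct weights. -/
def IsWeighting (T : PTree V) (d : ℕ) (w : V → ℕ) : Prop :=
  (∀ v, v ≠ T.root → 1 ≤ w v ∧ w v ≤ d) ∧
    ∀ r s, r ≠ T.root → s ≠ T.root → T.parent r = T.parent s → r ≠ s → w r ≠ w s

/-- The length of the path (code) from `q` up to a descendant `r`. -/
def codeLen (T : PTree V) (r q : V) : ℕ := T.depth r - T.depth q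

/-- The proximity relation induced by a weighting: `r ⤳_α q` iff `r ≻ q` and the first
entry of the code of `r` over `q` differs from all the later entries.  (The `j`-th entry
of the code, `1 ≤ j ≤ k`, is the weight of `parent^[k-j] r`, where `k` is the code length.) -/
def prox (T : PTree V) (w : V → ℕ) (r q : V) : Prop :=
  T.sdesc r q ∧ ∀ i, i + 2 ≤ T.codeLen r q →
    w (T.parent^[T.codeLen r q - 1] r) ≠ w (T.parent^[i] r)

end PTree

/-- The proximity index of `q` : the number of vertices `p` with `q ⤳ p`. -/
noncomputable def ind {V : Type} (rel : V → V → Prop) (q : V) : ℕ :=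
  Nat.card {p : V // rel q p}

/-- `s(q)` : the number of children of `q` whose proximity index exceeds that of `q`. -/
noncomputable def PTree.sInd {V : Type} (T : PTree V) (rel : V → V → Prop) (q : V) : ℕ :=
  Nat.card {r : V // T.child r q ∧ ind rel q < ind rel r}

/-- The P-Enriques-diagram conditions (P1), (P2), (P3) on a binary relation `rel`. -/
def PTree.Enriques {V : Type} (T : PTree V) (rel : V → V → Prop) : Prop :=
  (∀ q p, rel q p → T.sdesc q p) ∧
  (∀ q p, T.child q p → rel q p) ∧
  (∀ r p q, T.desc r p → T.sdesc p q → rel r q → rel p q)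

/-- Condition (a): the proximity index is non-decreasing along the descendancy order. -/
def PTree.CondA {V : Type} (T : PTree V) (rel : V → V → Prop) : Prop :=
  ∀ r q, T.desc r q → ind rel q ≤ ind rel r

/-- Condition (b): whenever `r ⤳ q`, at most one child `s` of `r` satisfies `¬ s ⤳ q`. -/
def PTree.CondB {V : Type} (T : PTree V) (rel : V → V → Prop) : Prop :=
  ∀ r q, rel r q → ∀ s s', T.child s r → T.child s' r → ¬ rel s q → ¬ rel s' q → s = s'

/-!
Say that `s` *drops* `q` if the parent of `s` is proximate to `q` but `s` is not. A weighting
induces `⤳` exactly when, for each `q` to which the parent `r` of `s` is proximate, the weight of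
`s` equals the first entry of the code of `r` over `q` iff `s` drops `q`.

Passing from `r` to `s` adds `r` to the set of vertices in proximity and removes those dropped by
`s`, so (a) says that every vertex drops at most one `q`; and (b) says that every `q` is dropped by
at most one child of `r`. Both are necessary: for the various `q` with `r ⤳ q` the first entries of
the codes of `r` over `q` are distinct, and so are the weights of siblings. Conversely, under (a)
and (b) give `s` the weight forced by the `q` it drops, and a fresh weight if it drops nothing. By
induction along the tree these first entries are distinct, so that `s` loses no proximity other than
the one it drops.
-/

namespace PTree

variable {V : Type} {T : PTree V} {rel : V → V → Prop} {w : V → ℕ} {q q' r s s' v : V}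

section Descendancy

theorem induction_parent {motive : V → Prop} (root : motive T.root)
    (step : ∀ v, v ≠ T.root → motive (T.parent v) → motive v) (v : V) : motive v := by
  by_cases hv : v = T.root
  · exact hv ▸ root
  · exact step v hv (induction_parent root step (T.parent v))
termination_by T.depth v
decreasing_by exact T.depth_eq v hv ▸ Nat.lt_succ_self _

theorem depth_parent (T : PTree V) (v : V) : T.depth (T.parent v) = T.depth v - 1 := by
  by_cases hv : v = T.root
  · rw [hv, T.parent_root, T.depth_root]
  · rw [T.depth_eq v hv, Nat.add_sub_cancel]

theorem depth_iterate_parent (T : PTree V) (k : ℕ) (v : V) :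
    T.depth (T.parent^[k] v) = T.depth v - k := by
  induction k with
  | zero => rfl
  | succ k ih => rw [Function.iterate_succ_apply', depth_parent, ih, Nat.sub_sub]

theorem eq_root_of_depth_eq_zero (hv : T.depth v = 0) : v = T.root := by
  by_contra hne
  exact Nat.succ_ne_zero _ ((T.depth_eq v hne).symm.trans hv)

theorem desc.depth_le (h : T.desc r q) : T.depth q ≤ T.depth r := by
  obtain ⟨k, rfl⟩ := h
  rw [depth_iterate_parent]
  exact Nat.sub_le _ _

theorem desc.iterate_codeLen (h : T.desc r q) : T.parent^[T.codeLen r q] r = q := by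
  obtain ⟨k, rfl⟩ := h
  have hlen : T.codeLen r (T.parent^[k] r) = min k (T.depth r) := by
    rw [codeLen, depth_iterate_parent]
    omega
  rcases le_total k (T.depth r) with hk | hk
  · rw [hlen, min_eq_left hk]
  · have iterate_eq_root {n : ℕ} (hn : T.depth r ≤ n) : T.parent^[n] r = T.root :=
      eq_root_of_depth_eq_zero (by rw [depth_iterate_parent, Nat.sub_eq_zero_of_le hn])
    rw [hlen, min_eq_right hk, iterate_eq_root le_rfl, iterate_eq_root hk]

theorem desc.eq_of_depth_eq (h : T.desc r q) (h' : T.desc r q') (hd : T.depth q = T.depth q') :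
    q = q' := by
  rw [← h.iterate_codeLen, ← h'.iterate_codeLen, codeLen, codeLen, hd]

theorem finite_setOf_desc (T : PTree V) (r : V) : {q | T.desc r q}.Finite :=
  ((Set.finite_Iic (T.depth r)).image fun k ↦ T.parent^[k] r).subset fun _ h ↦
    ⟨T.codeLen r _, Nat.sub_le _ _, h.iterate_codeLen⟩

theorem sdesc.depth_lt (h : T.sdesc r q) : T.depth q < T.depth r :=
  h.1.depth_le.lt_of_ne fun hd ↦ h.2 (desc.eq_of_depth_eq ⟨0, rfl⟩ h.1 hd.symm)

theorem sdesc.ne_root (h : T.sdesc r q) : r ≠ T.root := by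
  rintro rfl
  exact Nat.not_lt_zero _ (T.depth_root ▸ h.depth_lt)

theorem sdesc_parent (hs : s ≠ T.root) : T.sdesc s (T.parent s) := by
  refine ⟨⟨1, rfl⟩, fun h ↦ ?_⟩
  have := T.depth_eq s hs
  rw [← h] at this
  omega

theorem sdesc.of_parent (h : T.sdesc (T.parent s) q) : T.sdesc s q := by
  obtain ⟨k, hk⟩ := h.1
  refine ⟨⟨k + 1, hk⟩, ?_⟩
  rintro rfl
  have := h.depth_lt
  rw [depth_parent] at this
  omega

theorem sdesc.eq_parent_or_sdesc_parent (h : T.sdesc s q) :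
    q = T.parent s ∨ T.sdesc (T.parent s) q := by
  obtain ⟨⟨k, hk⟩, hne⟩ := h
  cases k with
  | zero => exact absurd hk hne
  | succ k => exact or_iff_not_imp_left.2 fun hq ↦ ⟨⟨k, hk⟩, Ne.symm hq⟩

end Descendancy

section FirstVertex

/-- The first vertex after `q` on the path from `q` to `r`, so that `w (T.first r q)` is the first
entry of the code of `r` over `q`. It is only meaningful for `T.sdesc r q`. -/
def first (T : PTree V) (r q : V) : V := T.parent^[T.codeLen r q - 1] r

theorem first_parent (hs : s ≠ T.root) : T.first s (T.parent s) = s := by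
  have hlen : T.codeLen s (T.parent s) = 1 := by
    rw [codeLen, T.depth_eq s hs]
    omega
  rw [first, hlen]
  rfl

theorem sdesc.codeLen_eq_codeLen_parent_add_one (h : T.sdesc (T.parent s) q) :
    T.codeLen s q = T.codeLen (T.parent s) q + 1 := by
  have := T.depth_eq s h.of_parent.ne_root
  have := h.depth_lt
  simp only [codeLen]
  omega

theorem sdesc.codeLen_pos (h : T.sdesc r q) : 0 < T.codeLen r q :=
  Nat.sub_pos_of_lt h.depth_lt

theorem sdesc.first_eq_first_parent (h : T.sdesc (T.parent s) q) :
    T.first s q = T.first (T.parent s) q := by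
  obtain ⟨n, hn⟩ := Nat.exists_eq_succ_of_ne_zero h.codeLen_pos.ne'
  rw [first, first, h.codeLen_eq_codeLen_parent_add_one, hn]
  rfl

theorem depth_first_parent_lt (hs : s ≠ T.root) (q : V) :
    T.depth (T.first (T.parent s) q) < T.depth s := by
  have := T.depth_eq s hs
  rw [first, depth_iterate_parent]
  omega

end FirstVertex

section Proximity

theorem prox_parent (w : V → ℕ) (hs : s ≠ T.root) : T.prox w s (T.parent s) := by
  refine ⟨sdesc_parent hs, fun i hi ↦ ?_⟩
  rw [codeLen, T.depth_eq s hs] at hi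
  omega

theorem sdesc.prox_iff_prox_parent (h : T.sdesc (T.parent s) q) :
    T.prox w s q ↔ T.prox w (T.parent s) q ∧ w s ≠ w (T.first (T.parent s) q) := by
  have hpos := h.codeLen_pos
  have hprox : T.prox w s q ↔ ∀ i, i + 2 ≤ T.codeLen (T.parent s) q + 1 →
      w (T.first (T.parent s) q) ≠ w (T.parent^[i] s) := by
    rw [← h.first_eq_first_parent, ← h.codeLen_eq_codeLen_parent_add_one]
    exact and_iff_right h.of_parent
  have hprox_parent : T.prox w (T.parent s) q ↔ ∀ i, i + 2 ≤ T.codeLen (T.parent s) q →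
      w (T.first (T.parent s) q) ≠ w (T.parent^[i + 1] s) := and_iff_right h
  rw [hprox, hprox_parent]
  refine ⟨fun hw ↦ ⟨fun i hi ↦ hw (i + 1) (by omega), (hw 0 (by omega)).symm⟩, ?_⟩
  rintro ⟨hw, hw₀⟩ (_ | i) hi
  · exact hw₀.symm
  · exact hw i (by omega)

theorem prox.weight_first_ne (h : T.prox w r q) (h' : T.sdesc r q')
    (hd : T.depth q < T.depth q') : w (T.first r q) ≠ w (T.first r q') := by
  have := h'.depth_lt
  refine h.2 _ ?_
  simp only [codeLen]
  omega

theorem prox.eq_of_weight_first_eq (h : T.prox w r q) (h' : T.prox w r q')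
    (hw : w (T.first r q) = w (T.first r q')) : q = q' := by
  rcases lt_trichotomy (T.depth q) (T.depth q') with hd | hd | hd
  · exact absurd hw (h.weight_first_ne h'.1 hd)
  · exact h.1.1.eq_of_depth_eq h'.1.1 hd
  · exact absurd hw.symm (h'.weight_first_ne h.1 hd)

end Proximity

section Enriques

theorem Enriques.sdesc (hE : T.Enriques rel) (h : rel r q) : T.sdesc r q := hE.1 r q h

theorem Enriques.rel_parent (hE : T.Enriques rel) (hs : s ≠ T.root) : rel s (T.parent s) :=
  hE.2.1 s _ ⟨rfl, hs⟩

theorem Enriques.eq_parent_or_rel_parent (hE : T.Enriques rel) (h : rel s q) :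
    q = T.parent s ∨ rel (T.parent s) q :=
  (hE.sdesc h).eq_parent_or_sdesc_parent.imp_right fun hq ↦ hE.2.2 s _ q ⟨1, rfl⟩ hq h

theorem Enriques.prox_iff_rel_iff (hE : T.Enriques rel) :
    (∀ r q, T.prox w r q ↔ rel r q) ↔
      ∀ s q, rel (T.parent s) q → (w s = w (T.first (T.parent s) q) ↔ ¬ rel s q) := by
  constructor
  · intro hprox s q h
    rw [← hprox s q, (hE.sdesc h).prox_iff_prox_parent, hprox, and_iff_right h, not_not]
  · intro hw r
    induction r using T.induction_parent with
    | root =>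
      exact fun q ↦ iff_of_false (fun h ↦ h.1.ne_root rfl) fun h ↦ (hE.sdesc h).ne_root rfl
    | step s hs ih =>
      have step : ∀ q, rel (T.parent s) q → (T.prox w s q ↔ rel s q) := fun q h ↦ by
        rw [(hE.sdesc h).prox_iff_prox_parent, ih, and_iff_right h, Ne, hw s q h, not_not]
      refine fun q ↦ ⟨fun h ↦ ?_, fun h ↦ ?_⟩
      · rcases h.1.eq_parent_or_sdesc_parent with rfl | hq
        · exact hE.rel_parent hs
        · exact (step q ((ih q).1 (hq.prox_iff_prox_parent.1 h).1)).1 h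
      · rcases hE.eq_parent_or_rel_parent h with rfl | hq
        · exact prox_parent w hs
        · exact (step q hq).2 h

end Enriques

section Drops

/-- `s` drops `q` if the parent of `s` is proximate to `q` but `s` is not. Since the root is its
own parent, the root drops nothing. -/
def Drops (T : PTree V) (rel : V → V → Prop) (s q : V) : Prop := rel (T.parent s) q ∧ ¬ rel s q

theorem Drops.ne_root (h : T.Drops rel s q) : s ≠ T.root := by
  rintro rfl
  exact h.2 (T.parent_root ▸ h.1)

theorem Enriques.finite_setOf_rel (hE : T.Enriques rel) (r : V) : {q | rel r q}.Finite :=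
  (T.finite_setOf_desc r).subset fun _ h ↦ (hE.sdesc h).1

theorem Enriques.finite_setOf_drops (hE : T.Enriques rel) (s : V) : {q | T.Drops rel s q}.Finite :=
  (hE.finite_setOf_rel (T.parent s)).subset fun _ h ↦ h.1

theorem Enriques.ind_add_ncard_drops (hE : T.Enriques rel) (hs : s ≠ T.root) :
    ind rel s + {q | T.Drops rel s q}.ncard = ind rel (T.parent s) + 1 := by
  have hfin := hE.finite_setOf_rel (T.parent s)
  have hnotMem : T.parent s ∉ {q | rel (T.parent s) q} := fun h ↦ (hE.sdesc h).2 rfl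
  have hsub : {q | rel s q} ⊆ insert (T.parent s) {q | rel (T.parent s) q} :=
    fun _ h ↦ hE.eq_parent_or_rel_parent h
  have hsdiff : {q | T.Drops rel s q} =
      insert (T.parent s) {q | rel (T.parent s) q} \ {q | rel s q} :=
    (Set.insert_sdiff_of_mem {q | rel (T.parent s) q} (t := {q | rel s q}) (hE.rel_parent hs)).symm
  calc ind rel s + {q | T.Drops rel s q}.ncard
      = (insert (T.parent s) {q | rel (T.parent s) q}).ncard := by
        rw [hsdiff, add_comm]
        exact Set.ncard_sdiff_add_ncard_of_subset hsub (hfin.insert _)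
    _ = ind rel (T.parent s) + 1 := Set.ncard_insert_of_notMem hnotMem hfin

theorem Enriques.ind_parent_le_iff (hE : T.Enriques rel) :
    ind rel (T.parent s) ≤ ind rel s ↔ {q | T.Drops rel s q}.Subsingleton := by
  by_cases hs : s = T.root
  · rw [hs, T.parent_root]
    exact iff_of_true le_rfl fun _ h ↦ absurd rfl (Drops.ne_root h)
  · have := hE.ind_add_ncard_drops hs
    have : Finite {q | T.Drops rel s q} := hE.finite_setOf_drops s
    rw [← Set.ncard_le_one_iff_subsingleton]
    omega

theorem condA_iff_ind_parent_le : T.CondA rel ↔ ∀ s, ind rel (T.parent s) ≤ ind rel s := by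
  refine ⟨fun hA s ↦ hA s _ ⟨1, rfl⟩, ?_⟩
  rintro h r _ ⟨k, rfl⟩
  induction k with
  | zero => exact le_rfl
  | succ k ih =>
    rw [Function.iterate_succ_apply']
    exact (h _).trans ih

theorem Enriques.condA_iff (hE : T.Enriques rel) :
    T.CondA rel ↔ ∀ s, {q | T.Drops rel s q}.Subsingleton := by
  simp only [condA_iff_ind_parent_le, hE.ind_parent_le_iff]

theorem condB_iff : T.CondB rel ↔
    ∀ s s' q, T.parent s = T.parent s' → T.Drops rel s q → T.Drops rel s' q → s = s' := by
  constructor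
  · intro hB s s' q hp h h'
    exact hB _ q h'.1 s s' ⟨hp, h.ne_root⟩ ⟨rfl, h'.ne_root⟩ h.2 h'.2
  · rintro hB r q h s s' ⟨rfl, -⟩ ⟨hp, -⟩ hs hs'
    exact hB s s' q hp.symm ⟨h, hs⟩ ⟨hp.symm ▸ h, hs'⟩

end Drops

section Necessity

theorem Enriques.condA_of_prox_iff_rel (hE : T.Enriques rel)
    (hprox : ∀ r q, T.prox w r q ↔ rel r q) : T.CondA rel := by
  refine hE.condA_iff.2 fun s q h q' h' ↦ ?_
  have hw := hE.prox_iff_rel_iff.1 hprox s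
  refine ((hprox _ _).2 h.1).eq_of_weight_first_eq ((hprox _ _).2 h'.1) ?_
  exact ((hw q h.1).2 h.2).symm.trans ((hw q' h'.1).2 h'.2)

theorem Enriques.condB_of_prox_iff_rel {d : ℕ} (hE : T.Enriques rel) (hweight : T.IsWeighting d w)
    (hprox : ∀ r q, T.prox w r q ↔ rel r q) : T.CondB rel := by
  refine condB_iff.2 fun s s' q hp h h' ↦ ?_
  have hw := hE.prox_iff_rel_iff.1 hprox
  have hws : w s = w s' := by
    rw [(hw s q h.1).2 h.2, (hw s' q h'.1).2 h'.2, hp]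
  exact not_imp_not.1 (hweight.2 s s' h.ne_root h'.ne_root hp) hws

end Necessity

section Label

open Classical in
/-- The vertex naming the weight of `s` in the weighting that realizes `rel`: if `s` drops some `q`,
its weight must be that of the first vertex from `q` towards the parent of `s`; otherwise `s`
receives a fresh weight, named by `s` itself. -/
noncomputable def label (T : PTree V) (rel : V → V → Prop) (s : V) : V :=
  if h : ∃ q, T.Drops rel s q then label T rel (T.first (T.parent s) h.choose) else s
termination_by T.depth s
decreasing_by exact depth_first_parent_lt h.choose_spec.ne_root _

theorem label_eq_self (h : ¬ ∃ q, T.Drops rel s q) : T.label rel s = s := by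
  rw [label, dif_neg h]

theorem Drops.label_eq (h : T.Drops rel s q) (hs : {q | T.Drops rel s q}.Subsingleton) :
    T.label rel s = T.label rel (T.first (T.parent s) q) := by
  have hex : ∃ q, T.Drops rel s q := ⟨q, h⟩
  rw [label, dif_pos hex, hs hex.choose_spec h]

theorem depth_label_le (T : PTree V) (rel : V → V → Prop) (s : V) :
    T.depth (T.label rel s) ≤ T.depth s := by
  fun_induction label T rel s with
  | case1 s h ih => exact ih.trans (depth_first_parent_lt h.choose_spec.ne_root _).le
  | case2 => exact le_rfl

theorem depth_label_first_parent_lt (hs : s ≠ T.root) (q : V) :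
    T.depth (T.label rel (T.first (T.parent s) q)) < T.depth s :=
  (T.depth_label_le rel _).trans_lt (depth_first_parent_lt hs q)

theorem depth_label_lt_iff : T.depth (T.label rel s) < T.depth s ↔ ∃ q, T.Drops rel s q := by
  refine ⟨fun h ↦ ?_, fun h ↦ ?_⟩
  · by_contra hs
    exact h.ne (congrArg T.depth (label_eq_self hs))
  · rw [label, dif_pos h]
    exact depth_label_first_parent_lt h.choose_spec.ne_root _

theorem Enriques.label_ne_label_first_parent (hE : T.Enriques rel)
    (hdrops : {q | T.Drops rel s q}.Subsingleton)
    (hinj : {q | rel (T.parent s) q}.InjOn fun q ↦ T.label rel (T.first (T.parent s) q))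
    (hp : rel (T.parent s) q) (h : rel s q) :
    T.label rel s ≠ T.label rel (T.first (T.parent s) q) := by
  intro heq
  have hlt := depth_label_first_parent_lt (rel := rel) (hE.sdesc h).ne_root q
  obtain ⟨q', hq'⟩ := depth_label_lt_iff.1 (heq ▸ hlt)
  exact hq'.2 (hinj hp hq'.1 (heq.symm.trans (hq'.label_eq hdrops)) ▸ h)

theorem Enriques.injOn_label_first (hE : T.Enriques rel)
    (hdrops : ∀ s, {q | T.Drops rel s q}.Subsingleton) (r : V) :
    {q | rel r q}.InjOn fun q ↦ T.label rel (T.first r q) := by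
  induction r using T.induction_parent with
  | root => exact fun q h ↦ absurd rfl (hE.sdesc h).ne_root
  | step s hs ih =>
    have hne : ∀ q, rel (T.parent s) q → rel s q →
        T.label rel (T.first s (T.parent s)) ≠ T.label rel (T.first s q) := fun q hp h ↦ by
      rw [first_parent hs, (hE.sdesc hp).first_eq_first_parent]
      exact hE.label_ne_label_first_parent (hdrops s) ih hp h
    intro q h q' h' heq
    rcases hE.eq_parent_or_rel_parent h with rfl | hp <;>
      rcases hE.eq_parent_or_rel_parent h' with rfl | hp'
    · rfl
    · exact absurd heq (hne q' hp' h')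
    · exact absurd heq.symm (hne q hp h)
    · refine ih hp hp' ?_
      simpa only [(hE.sdesc hp).first_eq_first_parent, (hE.sdesc hp').first_eq_first_parent]
        using heq

theorem Enriques.label_eq_label_first_parent_iff (hE : T.Enriques rel)
    (hdrops : ∀ s, {q | T.Drops rel s q}.Subsingleton) (h : rel (T.parent s) q) :
    T.label rel s = T.label rel (T.first (T.parent s) q) ↔ ¬ rel s q :=
  ⟨fun heq hs ↦ hE.label_ne_label_first_parent (hdrops s) (hE.injOn_label_first hdrops _) h hs heq,
    fun hs ↦ Drops.label_eq ⟨h, hs⟩ (hdrops s)⟩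

theorem Enriques.eq_of_label_eq_of_parent_eq (hE : T.Enriques rel) (hA : T.CondA rel)
    (hB : T.CondB rel) (hs : s ≠ T.root) (hs' : s' ≠ T.root) (hp : T.parent s = T.parent s')
    (heq : T.label rel s = T.label rel s') : s = s' := by
  have hdrops := hE.condA_iff.1 hA
  have hdepth : T.depth s = T.depth s' := by rw [T.depth_eq s hs, T.depth_eq s' hs', hp]
  have hiff : (∃ q, T.Drops rel s q) ↔ ∃ q, T.Drops rel s' q := by
    rw [← depth_label_lt_iff, ← depth_label_lt_iff, heq, hdepth]
  by_cases h : ∃ q, T.Drops rel s q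
  · obtain ⟨q', hq'⟩ := hiff.1 h
    obtain ⟨q, hq⟩ := h
    have hqq' : q = q' := by
      refine hE.injOn_label_first hdrops (T.parent s) hq.1 (hp ▸ hq'.1) ?_
      dsimp only
      rw [← hq.label_eq (hdrops s), heq, hq'.label_eq (hdrops s'), hp]
    exact condB_iff.1 hB s s' q hp hq (hqq' ▸ hq')
  · rwa [label_eq_self h, label_eq_self (hiff.not.1 h)] at heq

end Label

theorem exists_isWeighting_eq_iff {β : Type*} [Finite β] (f : V → β)
    (hf : ∀ s s', s ≠ T.root → s' ≠ T.root → T.parent s = T.parent s' → f s = f s' → s = s') :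
    ∃ d, 2 ≤ d ∧ ∃ w, T.IsWeighting d w ∧ ∀ v v', w v = w v' ↔ f v = f v' := by
  let e : β → ℕ := fun b ↦ Finite.equivFin β b + 1
  have he : Function.Injective e :=
    (add_left_injective 1).comp (Fin.val_injective.comp (Finite.equivFin β).injective)
  refine ⟨Nat.card β + 2, Nat.le_add_left _ _, e ∘ f, ⟨fun v _ ↦ ⟨Nat.le_add_left _ _, ?_⟩, ?_⟩,
    fun v v' ↦ he.eq_iff⟩
  · have := (Finite.equivFin β (f v)).isLt
    simp only [e, Function.comp_apply]
    omega
  · exact fun s s' hs hs' hp hne hw ↦ hne (hf s s' hs hs' hp (he hw))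

end PTree

/-- Let `Γ` be a finite rooted tree and `⤳` a binary relation on its
vertices satisfying the P-Enriques-diagram conditions (P1), (P2), (P3).  Then there exist
an integer `d ≥ 2` and a `d`-weighting `α` of `Γ` whose induced proximity relation equals
`⤳` if and only if (a) the proximity index is non-decreasing and (b) whenever `r ⤳ q`,
at most one child `s ∈ r⁺` satisfies `¬ (s ⤳ q)`. -/
theorem toric_PEnriques_characterization {V : Type} [Fintype V] (T : PTree V)
    (rel : V → V → Prop) (hE : T.Enriques rel) :
    (∃ d : ℕ, 2 ≤ d ∧ ∃ w : V → ℕ, T.IsWeighting d w ∧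
        ∀ r q, T.prox w r q ↔ rel r q) ↔
      T.CondA rel ∧ T.CondB rel := by
  constructor
  · rintro ⟨d, -, w, hweight, hprox⟩
    exact ⟨hE.condA_of_prox_iff_rel hprox, hE.condB_of_prox_iff_rel hweight hprox⟩
  · rintro ⟨hA, hB⟩
    obtain ⟨d, hd, w, hweight, hw⟩ := PTree.exists_isWeighting_eq_iff (T.label rel)
      fun _ _ ↦ hE.eq_of_label_eq_of_parent_eq hA hB
    refine ⟨d, hd, w, hweight, hE.prox_iff_rel_iff.2 fun s q h ↦ ?_⟩
    rw [hw, hE.label_eq_label_first_parent_iff (hE.condA_iff.1 hA) h]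
end

section
/- Let n ≥ 1 and let a = (a₁,…,a_n) and b = (b₁,…,b_n) be two sequences of positive integers of the same length n. If the induced proximity relations coincide, i.e. for all 0 ≤ i < j ≤ n one has (a_{i+1} ≠ a_l for all i+2 ≤ l ≤ j) ⟺ (b_{i+1} ≠ b_l for all i+2 ≤ l ≤ j), then the induced linear proximity relations coincide, i.e. for all 0 ≤ i < j ≤ n one has (j = i+1, or (a_{i+1} ≠ a_{i+2} and a_{i+2} = a_{i+3} = ⋯ = a_j)) ⟺ (j = i+1, or (b_{i+1} ≠ b_{i+2} and b_{i+2} = b_{i+3} = ⋯ = b_j)). (Combinatorial form of the Proposition: if 𝒞 is a toric chain constellation, in any dimension, the proximity relation determines the linear proximity relation.) -/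
/-!
Two steps up the chain, `Q_{k+2}` is proximate to `Q_k` exactly when `a_{k+1} ≠ a_{k+2}`, so the
proximity relation records which consecutive weights agree. A code is of the form `(a, b, …, b)`
with `a ≠ b` exactly when its first two weights differ and all later consecutive weights agree.
-/

section LinearProximity

variable {α β : Type*}

/-- `Q_j` is proximate to `Q_i` in the chain coded by `a`, for `i < j`. Weights are indexed from
`1`, so `a 0` plays no role. -/
def IsProximate (a : ℕ → α) (i j : ℕ) : Prop :=
  ∀ l, i + 2 ≤ l → l ≤ j → a (i + 1) ≠ a l

/-- `Q_j` is linearly proximate to `Q_i` in the chain coded by `a`, for `i < j`: the code of `Q_j`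
over `Q_i` is a single weight or has the form `(a, b, …, b)` with `a ≠ b`. The relation is
meaningless for `j ≤ i`, where it need not fail. -/
def IsLinearlyProximate (a : ℕ → α) (i j : ℕ) : Prop :=
  j = i + 1 ∨ (a (i + 1) ≠ a (i + 2) ∧ ∀ l, i + 3 ≤ l → l ≤ j → a l = a (i + 2))

theorem isProximate_add_two_iff (a : ℕ → α) (k : ℕ) :
    IsProximate a k (k + 2) ↔ a (k + 1) ≠ a (k + 2) := by
  refine ⟨fun h => h _ le_rfl le_rfl, fun hne l hkl hlk => ?_⟩
  rwa [le_antisymm hlk hkl]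

theorem forall_eq_left_iff_forall_eq_succ (f : ℕ → α) (m n : ℕ) :
    (∀ l, m < l → l ≤ n → f l = f m) ↔ ∀ k, m ≤ k → k < n → f k = f (k + 1) := by
  constructor
  · intro hconst k hmk hkn
    have hsucc : f (k + 1) = f m := hconst (k + 1) (by lia) hkn
    obtain rfl | hmk := hmk.eq_or_lt
    · exact hsucc.symm
    · exact (hconst k hmk hkn.le).trans hsucc.symm
  · intro hstep l hml
    induction l, hml using Nat.le_induction with
    | base => exact fun hn => (hstep m le_rfl hn).symm
    | succ k hmk ih =>
      exact fun hn => (hstep k (Nat.le_of_lt hmk) hn).symm.trans (ih (Nat.le_of_lt hn))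

theorem isLinearlyProximate_iff_isProximate_add_two (a : ℕ → α) (i j : ℕ) :
    IsLinearlyProximate a i j ↔
      j = i + 1 ∨
        (IsProximate a i (i + 2) ∧ ∀ k, i < k → k + 2 ≤ j → ¬ IsProximate a k (k + 2)) := by
  have hconst : (∀ l, i + 3 ≤ l → l ≤ j → a l = a (i + 2)) ↔
      ∀ k, i < k → k + 2 ≤ j → a (k + 1) = a (k + 2) := by
    refine (forall_eq_left_iff_forall_eq_succ a (i + 2) j).trans
      ⟨fun h k hik hkj => h (k + 1) (by lia) hkj, fun h k hik hkj => ?_⟩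
    obtain _ | k := k
    · lia
    · exact h k (by lia) hkj
  simp only [IsLinearlyProximate, isProximate_add_two_iff, not_not, hconst]

theorem chain_proximity_determines_linear_proximity_general {a : ℕ → α} {b : ℕ → β} {i j : ℕ}
    (hij : i < j)
    (hprox : ∀ k, i ≤ k → k + 2 ≤ j → (IsProximate a k (k + 2) ↔ IsProximate b k (k + 2))) :
    IsLinearlyProximate a i j ↔ IsLinearlyProximate b i j := by
  simp only [isLinearlyProximate_iff_isProximate_add_two]
  refine or_congr_right' fun hj => and_congr (hprox i le_rfl (by lia)) ?_
  exact forall₃_congr fun k hik hkj => not_congr (hprox k hik.le hkj)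

end LinearProximity

/-- (Combinatorial form of: for a toric chain constellation, the proximity
relation determines the linear proximity relation.)  Let `a, b : ℕ → ℕ` code two toric
chains of the same length `n ≥ 1` (entries `a 1, …, a n` and `b 1, …, b n` positive).  If
the induced proximity relations coincide, i.e. for all `0 ≤ i < j ≤ n`,
`(∀ l, i+2 ≤ l ≤ j → a (i+1) ≠ a l) ↔ (∀ l, i+2 ≤ l ≤ j → b (i+1) ≠ b l)`,
then the induced linear proximity relations coincide, i.e. for all `0 ≤ i < j ≤ n`,
`(j = i+1 ∨ (a (i+1) ≠ a (i+2) ∧ a (i+2) = ⋯ = a j)) ↔ (same for b)`. -/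
theorem chain_proximity_determines_linear_proximity
    (n : ℕ) (hn : 1 ≤ n) (a b : ℕ → ℕ)
    (ha : ∀ l, 1 ≤ l → l ≤ n → 0 < a l) (hb : ∀ l, 1 ≤ l → l ≤ n → 0 < b l)
    (hprox : ∀ i j, i < j → j ≤ n →
      ((∀ l, i + 2 ≤ l → l ≤ j → a (i + 1) ≠ a l) ↔
        (∀ l, i + 2 ≤ l → l ≤ j → b (i + 1) ≠ b l))) :
    ∀ i j, i < j → j ≤ n →
      ((j = i + 1 ∨ (a (i + 1) ≠ a (i + 2) ∧ ∀ l, i + 3 ≤ l → l ≤ j → a l = a (i + 2))) ↔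
        (j = i + 1 ∨ (b (i + 1) ≠ b (i + 2) ∧ ∀ l, i + 3 ≤ l → l ≤ j → b l = b (i + 2)))) := by
  intro i j hij hj
  exact chain_proximity_determines_linear_proximity_general hij
    fun k _ hkj => hprox k (k + 2) (by lia) (hkj.trans hj)
end

section
/- Let V be a finite set equipped with a partial order ≤ and a binary relation ↠ such that R ↠ P implies P < R, and let M be the integer square matrix indexed by V determined by M_{QQ} = 1 for all Q, M_{PQ} = 0 whenever P ≠ Q and ¬(P ≤ Q), and M_{PQ} = Σ_{R ∈ V, R ≤ Q, R ↠ P} M_{RQ} whenever P < Q. If m and r are integer vectors indexed by V with m = M·r, then for every Q ∈ V one has r_Q = m_Q − Σ_{P ↠ Q} m_P. (This is the formula for the exponents of the factorization of a toric finitely supported complete ideal with weights m_Q into the special *-simple ideals: r_Q = m_Q − Σ_{P ↠ Q} m_P.) -/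
/-!
Let `L` be the matrix with `L Q Q = 1`, `L Q P = -1` if `P ↠ Q`, and zeros elsewhere. Column `S` of
`L * M` vanishes at every `Q < S` by the recursion defining `M`. At every other `Q` the points
`P ↠ Q` satisfy `¬ P ≤ S`, so they contribute nothing and only `M Q S` remains. Hence `L * M = 1`,
and `m = M *ᵥ r` gives `r = L *ᵥ m`.
-/

open Matrix

section LinearProximity

variable {V A : Type*} [Fintype V]

section Preorder

variable [Preorder V] [AddCommMonoid A] {lp : V → V → Prop} [DecidableRel lp] {f : V → A} {P Q : V}

lemma sum_filter_le_and_eq_sum_filter [DecidableRel ((· ≤ ·) : V → V → Prop)]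
    (hf : ∀ R, ¬ R ≤ Q → f R = 0) :
    ∑ R with R ≤ Q ∧ lp R P, f R = ∑ R with lp R P, f R := by
  simp only [and_comm (a := _ ≤ Q), ← Finset.filter_filter]
  exact Finset.sum_filter_of_ne fun R _ hR => not_imp_comm.1 (hf R) hR

lemma sum_filter_eq_zero_of_not_lt (hlp : ∀ R P, lp R P → P < R)
    (hf : ∀ R, ¬ R ≤ Q → f R = 0) (hPQ : ¬ P < Q) :
    ∑ R with lp R P, f R = 0 := by
  refine Finset.sum_eq_zero fun R hR => hf R fun hRQ => hPQ ?_
  exact (hlp R P (Finset.mem_filter.1 hR).2).trans_le hRQ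

end Preorder

/-- The proximity matrix of the relation `lp`: the identity minus the indicator of `lp`, whose
product with a vector of multiplicities `m` has the entries `m Q - ∑_{P ↠ Q} m P`. Rows are indexed
by the target of `lp`, so row `Q` has the entry `-1` at those `P` with `lp P Q`. -/
def linearProximityMatrix {V : Type*} [DecidableEq V] (A : Type*) [Ring A] (lp : V → V → Prop)
    [DecidableRel lp] : Matrix V V A :=
  1 - of fun Q P => if lp P Q then 1 else 0

variable [Ring A] {lp : V → V → Prop} [DecidableRel lp]

lemma linearProximityMatrix_mulVec_apply [DecidableEq V] (m : V → A) (Q : V) :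
    (linearProximityMatrix A lp *ᵥ m) Q = m Q - ∑ P with lp P Q, m P := by
  rw [linearProximityMatrix, sub_mulVec, one_mulVec, Pi.sub_apply]
  simp [mulVec, dotProduct, Finset.sum_filter]

lemma linearProximityMatrix_mul_apply [DecidableEq V] (M : Matrix V V A) (Q S : V) :
    (linearProximityMatrix A lp * M) Q S = M Q S - ∑ P with lp P Q, M P S :=
  linearProximityMatrix_mulVec_apply (fun P => M P S) Q

variable [PartialOrder V] [DecidableRel ((· ≤ ·) : V → V → Prop)] {M : Matrix V V A}

lemma linearProximityMatrix_mul_eq_one [DecidableEq V] (hlp : ∀ R P, lp R P → P < R)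
    (hMdiag : ∀ Q, M Q Q = 1) (hMzero : ∀ P Q, ¬ P ≤ Q → M P Q = 0)
    (hMrec : ∀ P Q, P < Q → M P Q = ∑ R with R ≤ Q ∧ lp R P, M R Q) :
    linearProximityMatrix A lp * M = 1 := by
  ext Q S
  rw [linearProximityMatrix_mul_apply]
  have column_zero : ∀ R, ¬ R ≤ S → M R S = 0 := fun R => hMzero R S
  by_cases hQS : Q < S
  · rw [one_apply_ne hQS.ne, hMrec Q S hQS, sum_filter_le_and_eq_sum_filter column_zero, sub_self]
  · rw [sum_filter_eq_zero_of_not_lt hlp column_zero hQS, sub_zero]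
    obtain rfl | hne := eq_or_ne Q S
    · rw [hMdiag, one_apply_eq]
    · rw [one_apply_ne hne, column_zero Q fun hle => hQS (hle.lt_of_ne hne)]

theorem special_simple_factorization_exponents_general (hlp : ∀ R P, lp R P → P < R)
    (hMdiag : ∀ Q, M Q Q = 1) (hMzero : ∀ P Q, ¬ P ≤ Q → M P Q = 0)
    (hMrec : ∀ P Q, P < Q → M P Q = ∑ R with R ≤ Q ∧ lp R P, M R Q)
    {m r : V → A} (hm : m = M *ᵥ r) (Q : V) :
    r Q = m Q - ∑ P with lp P Q, m P := by
  classical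
  have r_eq : linearProximityMatrix A lp *ᵥ m = r := by
    rw [hm, mulVec_mulVec, linearProximityMatrix_mul_eq_one hlp hMdiag hMzero hMrec, one_mulVec]
  rw [← linearProximityMatrix_mulVec_apply, r_eq]

end LinearProximity

/-- Let `V` be a finite set with a partial order `≤` and a binary
relation `↠` (`lp`) such that `R ↠ P` implies `P < R`, and let `M` be the matrix
determined by `M Q Q = 1`, `M P Q = 0` if `P ≠ Q` and `¬ P ≤ Q`, and
`M P Q = ∑_{R ≤ Q, R ↠ P} M R Q` if `P < Q`.  If `m` and `r` are integer vectors with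
`m = M · r`, then for every `Q` one has `r Q = m Q − ∑_{P ↠ Q} m P`.  (Formula for the
exponents of the factorization into special *-simple ideals.) -/
theorem special_simple_factorization_exponents
    {V : Type} [Fintype V] [DecidableEq V] [PartialOrder V]
    [DecidableRel ((· ≤ ·) : V → V → Prop)]
    (lp : V → V → Prop) [DecidableRel lp] (hlp : ∀ R P, lp R P → P < R)
    (M : Matrix V V ℤ)
    (hMdiag : ∀ Q, M Q Q = 1)
    (hMzero : ∀ P Q, P ≠ Q → ¬ P ≤ Q → M P Q = 0)
    (hMrec : ∀ P Q, P < Q →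
      M P Q = ∑ R ∈ Finset.univ.filter (fun R => R ≤ Q ∧ lp R P), M R Q)
    (m r : V → ℤ) (hm : ∀ P, m P = ∑ Q : V, M P Q * r Q) :
    ∀ Q : V, r Q = m Q - ∑ P ∈ Finset.univ.filter (fun P => lp P Q), m P := by
  exact special_simple_factorization_exponents_general hlp hMdiag
    (fun P Q hPQ => hMzero P Q (ne_of_not_le hPQ) hPQ) hMrec (funext hm)
end

section
/- Let n ≥ 1 and let G be an additive submonoid of ℤⁿ. Call an element g ∈ G \ {0} extremal if g has no additive inverse in G and, whenever k·g = a + b with k a positive integer and a, b ∈ G, there exist positive integers s, t and non-negative integers q, p with s·a = q·g and t·b = p·g. Call two extremal elements x, y equivalent if m·x = k·y for some positive integers m, k. Say that G is semi-factorial if for every g ∈ G \ {0} there is a positive integer k such that k·g is a finite sum of extremal elements, and this factorization is unique in the following sense: if k·g = a₁ + ⋯ + a_s and k'·g = b₁ + ⋯ + b_t with k, k' positive integers, all a_i and all b_j extremal, the a_i pairwise non-equivalent and the b_j pairwise non-equivalent, then s = t and, after reindexing, a_i is equivalent to b_i for each i. Then G is semi-factorial if and only if the convex cone generated by G in ℝⁿ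 (the set of all finite non-negative real linear combinations of elements of G) is simplicial, i.e. equals the set of non-negative real linear combinations of some linearly independent family of vectors of ℝⁿ. -/
/-- An element `g ∈ G \ {0}` of an additive submonoid `G` of `ℤⁿ` is extremal if it has
no additive inverse in `G` and whenever `k • g = a + b` with `k` a positive integer and
`a, b ∈ G`, there exist positive integers `s, t` and non-negative integers `q, p` with
`s • a = q • g` and `t • b = p • g`. -/
def ExtremalElt {n : ℕ} (G : AddSubmonoid (Fin n → ℤ)) (g : Fin n → ℤ) : Prop :=
  g ∈ G ∧ g ≠ 0 ∧ (¬ ∃ h ∈ G, g + h = 0) ∧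
    ∀ k : ℕ, 0 < k → ∀ a b : Fin n → ℤ, a ∈ G → b ∈ G → k • g = a + b →
      ∃ s t q p : ℕ, 0 < s ∧ 0 < t ∧ s • a = q • g ∧ t • b = p • g

/-- Two elements are equivalent if positive integer multiples of them agree. -/
def EquivExtremal {n : ℕ} (x y : Fin n → ℤ) : Prop :=
  ∃ m k : ℕ, 0 < m ∧ 0 < k ∧ m • x = k • y

/-- `G` is semi-factorial: every non-zero `g ∈ G` has a positive multiple which is a
finite sum of extremal elements, and this factorization is unique, in the sense that any
two such factorizations into pairwise non-equivalent extremal elements have the same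
number of summands and, after reindexing, pairwise equivalent summands. -/
def SemiFactorial {n : ℕ} (G : AddSubmonoid (Fin n → ℤ)) : Prop :=
  ∀ g ∈ G, g ≠ 0 →
    (∃ k : ℕ, 0 < k ∧ ∃ (s : ℕ) (a : Fin s → (Fin n → ℤ)),
      (∀ i, ExtremalElt G (a i)) ∧ k • g = ∑ i, a i) ∧
    (∀ k k' : ℕ, 0 < k → 0 < k' →
      ∀ (s t : ℕ) (a : Fin s → (Fin n → ℤ)) (b : Fin t → (Fin n → ℤ)),
        (∀ i, ExtremalElt G (a i)) → (∀ j, ExtremalElt G (b j)) →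
        (∀ i i', i ≠ i' → ¬ EquivExtremal (a i) (a i')) →
        (∀ j j', j ≠ j' → ¬ EquivExtremal (b j) (b j')) →
        k • g = ∑ i, a i → k' • g = ∑ j, b j →
        ∃ σ : Fin s ≃ Fin t, ∀ i, EquivExtremal (a i) (b (σ i)))

/-- The convex cone generated by `G` in `ℝⁿ`: all finite non-negative real linear
combinations of elements of `G`. -/
def coneOf {n : ℕ} (G : AddSubmonoid (Fin n → ℤ)) : Set (Fin n → ℝ) :=
  {x | ∃ (m : ℕ) (c : Fin m → ℝ) (v : Fin m → (Fin n → ℤ)),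
    (∀ i, 0 ≤ c i) ∧ (∀ i, v i ∈ G) ∧
      x = ∑ i, c i • (fun j => ((v i j : ℤ) : ℝ))}

/-- A subset of `ℝⁿ` is a simplicial cone if it is the set of non-negative real linear
combinations of some linearly independent family of vectors. -/
def IsSimplicialCone {n : ℕ} (C : Set (Fin n → ℝ)) : Prop :=
  ∃ (m : ℕ) (v : Fin m → (Fin n → ℝ)), LinearIndependent ℝ v ∧
    C = {x | ∃ c : Fin m → ℝ, (∀ i, 0 ≤ c i) ∧ x = ∑ i, c i • v i}

/-!
Both conditions say that finitely many `ℤ`-linearly independent elements `wᵢ` of `G` generate `G`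
up to positive multiples; call such a family a ray basis.

If `w` is a ray basis, every `g ∈ G` has non-negative rational coordinates, and the support of a
sum is the union of the supports. Hence the extremal elements are those supported at one index, and
a factorization of a multiple of `g` into inequivalent extremal elements has exactly one factor for
each index in the support of `g`. Conversely, if factorizations are unique, representatives of the
classes of extremal elements admit no relation between disjointly supported `ℕ`-combinations, so
they are linearly independent, there are finitely many of them, and they form a ray basis.

If the cone is generated by linearly independent real vectors `vᵢ`, the ray through each `vᵢ` is a
face of the cone spanned by `G`, so it contains some `wᵢ ∈ G`. The real coordinates of `g ∈ G` in
the basis `w` are rational because a linear relation over `ℝ` between integer vectors forces one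
over `ℤ`.
-/

open Finset PointedCone

theorem sum_equivFin_symm {ι M : Type*} [AddCommMonoid M] (s : Finset ι) (f : ι → M) :
    ∑ i, f (s.equivFin.symm i) = ∑ i ∈ s, f i := by
  rw [Equiv.sum_comp s.equivFin.symm fun i : s ↦ f i, sum_coe_sort]

theorem exists_equiv_comp_eq_of_range_eq {α β γ : Type*} {f : α → γ} {g : β → γ}
    (hf : Function.Injective f) (hg : Function.Injective g) (h : Set.range f = Set.range g) :
    ∃ σ : α ≃ β, ∀ a, g (σ a) = f a :=
  ⟨(Equiv.ofInjective f hf).trans ((Equiv.setCongr h).trans (Equiv.ofInjective g hg).symm),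
    fun a ↦ by simp [Equiv.apply_ofInjective_symm]⟩

section RootClosure

variable {M : Type*} [AddCommMonoid M]

/-- The root closure of an additive submonoid `S`: the elements with a positive multiple in `S`. -/
def rootClosure (S : AddSubmonoid M) : AddSubmonoid M where
  carrier := {x | ∃ k : ℕ, 0 < k ∧ k • x ∈ S}
  zero_mem' := ⟨1, one_pos, by simp⟩
  add_mem' := by
    rintro x y ⟨k, hk, hx⟩ ⟨l, hl, hy⟩
    refine ⟨k * l, Nat.mul_pos hk hl, ?_⟩
    rw [smul_add, mul_nsmul x k l, mul_nsmul' y k l]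
    exact S.add_mem (S.nsmul_mem hx l) (S.nsmul_mem hy k)

theorem mem_rootClosure_of_nsmul_mem {S : AddSubmonoid M} {x : M} {k : ℕ} (hk : 0 < k)
    (hx : k • x ∈ rootClosure S) : x ∈ rootClosure S := by
  obtain ⟨l, hl, hlx⟩ := hx
  exact ⟨l * k, Nat.mul_pos hl hk, by rwa [mul_nsmul']⟩

end RootClosure

section LinearIndependence

variable {ι κ : Type*}

theorem linearIndependent_int_of_nat {M : Type*} [AddCommGroup M] {v : ι → M}
    (hv : LinearIndependent ℕ v) : LinearIndependent ℤ v := by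
  rw [linearIndependent_iff']
  intro s z hz i hi
  have hparts : ∑ i ∈ s, (z i).toNat • v i = ∑ i ∈ s, (-z i).toNat • v i := by
    rw [← sub_eq_zero, ← hz, ← sum_sub_distrib]
    refine sum_congr rfl fun i _ ↦ ?_
    rw [← natCast_zsmul, ← natCast_zsmul, ← sub_smul, Int.toNat_sub_toNat_neg]
  have := linearIndependent_iff'ₛ.1 hv s _ _ hparts i hi
  omega

theorem linearIndependent_piAlgebraMap_comp_iff {R S : Type*} [CommRing R] [CommRing S]
    [Algebra R S] [FaithfulSMul R S] [IsDomain S] [Finite κ] {w : ι → κ → R} :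
    LinearIndependent S (Pi.algebraMap κ R S ∘ w) ↔ LinearIndependent R w :=
  linearIndependent_algebraMap_comp_iff

theorem exists_linearMap_apply_eq_single {R : Type*} (K : Type*) [CommRing R] [Field K]
    [Algebra R K] [FaithfulSMul R K] [Finite κ] {w : ι → κ → R} (hw : LinearIndependent R w) :
    ∃ φ : (κ → R) →ₗ[R] (ι →₀ K), ∀ i, φ (w i) = Finsupp.single i 1 := by
  have hwK : LinearIndependent K (Pi.algebraMap κ R K ∘ w) :=
    linearIndependent_piAlgebraMap_comp_iff.2 hw
  obtain ⟨L, hL⟩ := LinearMap.exists_leftInverse_of_injective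
    (Finsupp.linearCombination K (Pi.algebraMap κ R K ∘ w)) (LinearMap.ker_eq_bot.2 hwK)
  refine ⟨L.restrictScalars R ∘ₗ Pi.algebraMap κ R K, fun i ↦ ?_⟩
  simpa using LinearMap.congr_fun hL (Finsupp.single i 1)

end LinearIndependence

section EquivExtremal

variable {n : ℕ} {x y z : Fin n → ℤ}

namespace EquivExtremal

theorem refl (x : Fin n → ℤ) : EquivExtremal x x :=
  ⟨1, 1, one_pos, one_pos, rfl⟩

theorem symm : EquivExtremal x y → EquivExtremal y x :=
  fun ⟨m, k, hm, hk, h⟩ ↦ ⟨k, m, hk, hm, h.symm⟩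

theorem trans : EquivExtremal x y → EquivExtremal y z → EquivExtremal x z := by
  rintro ⟨m, k, hm, hk, hxy⟩ ⟨m', k', hm', hk', hyz⟩
  refine ⟨m' * m, k * k', Nat.mul_pos hm' hm, Nat.mul_pos hk hk', ?_⟩
  rw [mul_smul, hxy, mul_smul, ← hyz, smul_comm]

theorem nsmul_left {k : ℕ} (hk : 0 < k) (x : Fin n → ℤ) : EquivExtremal (k • x) x :=
  ⟨1, k, one_pos, hk, one_smul _ _⟩

theorem of_nsmul_nsmul {k l : ℕ} (hk : 0 < k) (hl : 0 < l) (h : EquivExtremal (k • x) (l • y)) :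
    EquivExtremal x y :=
  (nsmul_left hk x).symm.trans (h.trans (nsmul_left hl y))

end EquivExtremal

variable (n) in
/-- `EquivExtremal` as a setoid on `ℤⁿ`. -/
def equivExtremalSetoid : Setoid (Fin n → ℤ) where
  r := EquivExtremal
  iseqv := ⟨EquivExtremal.refl, EquivExtremal.symm, EquivExtremal.trans⟩

end EquivExtremal

namespace ExtremalElt

variable {n : ℕ} {G : AddSubmonoid (Fin n → ℤ)} {a x y : Fin n → ℤ} {k : ℕ}

theorem mem (ha : ExtremalElt G a) : a ∈ G :=
  ha.1

theorem ne_zero (ha : ExtremalElt G a) : a ≠ 0 :=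
  ha.2.1

theorem add_ne_zero (ha : ExtremalElt G a) (hx : x ∈ G) : a + x ≠ 0 :=
  fun h ↦ ha.2.2.1 ⟨x, hx, h⟩

theorem sum_ne_zero {ι : Type*} {s : Finset ι} {b : ι → Fin n → ℤ}
    (hb : ∀ i ∈ s, ExtremalElt G (b i)) (hs : s.Nonempty) : ∑ i ∈ s, b i ≠ 0 := by
  classical
  obtain ⟨i, hi⟩ := hs
  rw [← add_sum_erase s b hi]
  exact (hb i hi).add_ne_zero (G.sum_mem fun j hj ↦ (hb j (mem_of_mem_erase hj)).mem)

theorem nsmul (ha : ExtremalElt G a) (hk : 0 < k) : ExtremalElt G (k • a) := by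
  refine ⟨G.nsmul_mem ha.mem k, smul_ne_zero hk.ne' ha.ne_zero, ?_, ?_⟩
  · rintro ⟨h, hh, hinv⟩
    refine ha.add_ne_zero (G.add_mem (G.nsmul_mem ha.mem (k - 1)) hh) ?_
    rw [← add_assoc, ← succ_nsmul', Nat.sub_add_cancel hk, hinv]
  · intro l hl x y hx hy hxy
    obtain ⟨s, t, q, p, hs, ht, hsx, hty⟩ :=
      ha.2.2.2 (l * k) (Nat.mul_pos hl hk) x y hx hy (by rw [mul_smul, hxy])
    refine ⟨k * s, k * t, q, p, Nat.mul_pos hk hs, Nat.mul_pos hk ht, ?_, ?_⟩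
    · rw [mul_smul, hsx, smul_comm]
    · rw [mul_smul, hty, smul_comm]

theorem equivExtremal_of_nsmul_eq_add (ha : ExtremalElt G a) (hk : 0 < k) (hx : x ∈ G)
    (hy : y ∈ G) (h : k • a = x + y) (hx0 : x ≠ 0) : EquivExtremal x a := by
  obtain ⟨s, -, q, -, hs, -, hsx, -⟩ := ha.2.2.2 k hk x y hx hy h
  refine ⟨s, q, hs, Nat.pos_of_ne_zero ?_, hsx⟩
  rintro rfl
  exact smul_ne_zero hs.ne' hx0 (by rw [hsx, zero_smul])

end ExtremalElt

/-- A ray basis of `G`: a `ℤ`-linearly independent family of elements of `G` such that every element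
of `G` has a positive multiple which is a sum of members of the family. -/
structure IsRayBasis {n : ℕ} {ι : Type*} (G : AddSubmonoid (Fin n → ℤ)) (w : ι → Fin n → ℤ) :
    Prop where
  mem : ∀ i, w i ∈ G
  linearIndependent : LinearIndependent ℤ w
  le_rootClosure : G ≤ rootClosure (AddSubmonoid.closure (Set.range w))

namespace IsRayBasis

variable {n : ℕ} {ι κ : Type*} {G : AddSubmonoid (Fin n → ℤ)} {w : ι → Fin n → ℤ}

theorem comp_equiv (h : IsRayBasis G w) (e : κ ≃ ι) : IsRayBasis G (w ∘ e) where
  mem i := h.mem (e i)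
  linearIndependent := h.linearIndependent.comp e e.injective
  le_rootClosure := by rw [e.surjective.range_comp]; exact h.le_rootClosure

theorem finite (h : IsRayBasis G w) : Finite ι :=
  h.linearIndependent.finite_of_isNoetherian

end IsRayBasis

namespace SemiFactorial

variable {n : ℕ} {G : AddSubmonoid (Fin n → ℤ)} {ι κ : Type*}

theorem exists_equivExtremal_of_sum_eq_sum (hG : SemiFactorial G) {s : Finset ι} {t : Finset κ}
    {a : ι → Fin n → ℤ} {b : κ → Fin n → ℤ} (ha : ∀ i ∈ s, ExtremalElt G (a i))
    (hb : ∀ j ∈ t, ExtremalElt G (b j))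
    (ha' : (s : Set ι).Pairwise fun i i' ↦ ¬ EquivExtremal (a i) (a i'))
    (hb' : (t : Set κ).Pairwise fun j j' ↦ ¬ EquivExtremal (b j) (b j'))
    (hab : ∑ i ∈ s, a i = ∑ j ∈ t, b j) {i : ι} (hi : i ∈ s) :
    ∃ j ∈ t, EquivExtremal (a i) (b j) := by
  obtain ⟨σ, hσ⟩ := (hG (∑ i ∈ s, a i) (G.sum_mem fun i hi ↦ (ha i hi).mem)
    (ExtremalElt.sum_ne_zero ha ⟨i, hi⟩)).2 1 1 one_pos one_pos _ _
    (fun i ↦ a (s.equivFin.symm i)) (fun j ↦ b (t.equivFin.symm j))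
    (fun i ↦ ha _ (coe_mem _)) (fun j ↦ hb _ (coe_mem _))
    (fun i i' hne ↦ ha' (coe_mem _) (coe_mem _) (by simpa [Subtype.ext_iff] using hne))
    (fun j j' hne ↦ hb' (coe_mem _) (coe_mem _) (by simpa [Subtype.ext_iff] using hne))
    (by rw [one_smul, sum_equivFin_symm]) (by rw [one_smul, sum_equivFin_symm, hab])
  exact ⟨_, coe_mem _, by simpa using hσ (s.equivFin ⟨i, hi⟩)⟩

theorem linearIndependent (hG : SemiFactorial G) {w : ι → Fin n → ℤ}
    (hw : ∀ i, ExtremalElt G (w i)) (hne : Pairwise fun i j ↦ ¬ EquivExtremal (w i) (w j)) :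
    LinearIndependent ℤ w := by
  refine linearIndependent_int_of_nat ?_
  by_contra hdep
  obtain ⟨s, t, c, hst, hsum, i, his, hci⟩ := not_linearIndependent_iffₒₛ.1 hdep
  have extremal (u : Finset ι) : ∀ j ∈ u.filter (c · ≠ 0), ExtremalElt G (c j • w j) :=
    fun j hj ↦ (hw j).nsmul (Nat.pos_of_ne_zero (mem_filter.1 hj).2)
  have inequivalent (u : Finset ι) : (u.filter (c · ≠ 0) : Set ι).Pairwise
      fun j j' ↦ ¬ EquivExtremal (c j • w j) (c j' • w j') := fun j hj j' hj' hjj' h ↦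
    hne hjj' (h.of_nsmul_nsmul (Nat.pos_of_ne_zero (mem_filter.1 hj).2)
      (Nat.pos_of_ne_zero (mem_filter.1 hj').2))
  have sum_support (u : Finset ι) : ∑ j ∈ u with c j ≠ 0, c j • w j = ∑ j ∈ u, c j • w j :=
    sum_filter_of_ne fun j _ hj h ↦ hj (by rw [h, zero_smul])
  obtain ⟨j, hj, hij⟩ := hG.exists_equivExtremal_of_sum_eq_sum (extremal s) (extremal t)
    (inequivalent s) (inequivalent t) (by rw [sum_support, sum_support, hsum])
    (mem_filter.2 ⟨his, hci.ne'⟩)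
  obtain ⟨hjt, hcj⟩ := mem_filter.1 hj
  have hij' : i ≠ j := disjoint_iff_ne.1 hst i his j hjt
  exact hne hij' (hij.of_nsmul_nsmul hci (Nat.pos_of_ne_zero hcj))

theorem le_rootClosure_of_extremalElt (hG : SemiFactorial G) {S : AddSubmonoid (Fin n → ℤ)}
    (hS : ∀ a, ExtremalElt G a → a ∈ rootClosure S) : G ≤ rootClosure S := by
  intro g hg
  rcases eq_or_ne g 0 with rfl | hg0
  · exact zero_mem _
  · obtain ⟨k, hk, s, a, ha, hka⟩ := (hG g hg hg0).1
    exact mem_rootClosure_of_nsmul_mem hk (hka ▸ sum_mem fun i _ ↦ hS _ (ha i))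

theorem exists_isRayBasis (hG : SemiFactorial G) :
    ∃ (m : ℕ) (w : Fin m → Fin n → ℤ), IsRayBasis G w := by
  let ray : Setoid {a // ExtremalElt G a} := (equivExtremalSetoid n).comap (↑)
  let rays := Quotient ray
  let w (r : rays) : Fin n → ℤ := r.out
  have hlin : LinearIndependent ℤ w := hG.linearIndependent (fun r ↦ r.out.2) fun r r' hne h ↦
    hne (Quotient.out_equiv_out.1 h)
  have hw : IsRayBasis G w := by
    refine ⟨fun r ↦ r.out.2.mem, hlin, hG.le_rootClosure_of_extremalElt fun a ha ↦ ?_⟩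
    obtain ⟨k, l, -, hl, hkl⟩ : EquivExtremal (w ⟦⟨a, ha⟩⟧) a :=
      Quotient.mk_out (s := ray) ⟨a, ha⟩
    exact ⟨l, hl, hkl ▸ nsmul_mem (AddSubmonoid.subset_closure (Set.mem_range_self _)) k⟩
  have := hw.finite
  obtain ⟨m, ⟨e⟩⟩ := Finite.exists_equiv_fin rays
  exact ⟨m, _, hw.comp_equiv e.symm⟩

end SemiFactorial

namespace IsRayBasis

variable {n : ℕ} {ι : Type*} {G : AddSubmonoid (Fin n → ℤ)} {w : ι → Fin n → ℤ}

section Coord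

variable (h : IsRayBasis G w)

/-- Coordinates with respect to a ray basis. Outside the rational span of the basis, where they are
not determined, they are given by an arbitrary linear extension. -/
noncomputable def coord : (Fin n → ℤ) →ₗ[ℤ] (ι →₀ ℚ) :=
  (exists_linearMap_apply_eq_single ℚ h.linearIndependent).choose

theorem coord_self (i : ι) : h.coord (w i) = Finsupp.single i 1 :=
  (exists_linearMap_apply_eq_single ℚ h.linearIndependent).choose_spec i

theorem exists_nsmul_eq_sum_coord [Fintype ι] {g : Fin n → ℤ} (hg : g ∈ G) :
    ∃ k : ℕ, 0 < k ∧ ∃ c : ι → ℕ, k • g = ∑ i, c i • w i ∧ ∀ i, k * h.coord g i = c i := by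
  obtain ⟨k, hk, hkg⟩ := h.le_rootClosure hg
  obtain ⟨c, hc⟩ := AddSubmonoid.mem_closure_range_iff_of_fintype.1 hkg
  refine ⟨k, hk, c, hc, fun i ↦ ?_⟩
  classical
  have hcoord := congr(h.coord $hc i)
  simp only [map_sum, map_nsmul, coord_self, Finsupp.finsetSum_apply, Finsupp.smul_apply,
    Finsupp.single_apply, smul_ite, smul_zero, sum_ite_eq', mem_univ, if_true] at hcoord
  simpa only [nsmul_eq_mul, mul_one] using hcoord

theorem coord_nonneg {g : Fin n → ℤ} (hg : g ∈ G) (i : ι) : 0 ≤ h.coord g i := by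
  have := h.finite
  have := Fintype.ofFinite ι
  obtain ⟨k, hk, c, -, hc⟩ := h.exists_nsmul_eq_sum_coord hg
  exact (mul_nonneg_iff_of_pos_left (Nat.cast_pos.2 hk)).1 (hc i ▸ Nat.cast_nonneg _)

theorem exists_nsmul_eq_nsmul {g : Fin n → ℤ} (hg : g ∈ G) {i : ι}
    (hi : ∀ j ≠ i, h.coord g j = 0) : ∃ k c : ℕ, 0 < k ∧ k • g = c • w i := by
  have := h.finite
  have := Fintype.ofFinite ι
  obtain ⟨k, hk, c, hkg, hc⟩ := h.exists_nsmul_eq_sum_coord hg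
  refine ⟨k, c i, hk, hkg.trans (Fintype.sum_eq_single i fun j hj ↦ ?_)⟩
  have hcj : c j = 0 := by simpa [hi j hj, eq_comm] using hc j
  rw [hcj, zero_smul]

theorem coord_eq_zero_iff_of_equivExtremal {x y : Fin n → ℤ} (hxy : EquivExtremal x y) (i : ι) :
    h.coord x i = 0 ↔ h.coord y i = 0 := by
  obtain ⟨k, l, hk, hl, hkl⟩ := hxy
  have hcoord : k • h.coord x i = l • h.coord y i := by
    simpa only [map_nsmul, Finsupp.smul_apply] using congr(h.coord $hkl i)
  rw [← smul_eq_zero_iff_right hk.ne', hcoord, smul_eq_zero_iff_right hl.ne']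

theorem range_eq_support_coord {κ : Type*} [Fintype κ] {k : ℕ} (hk : 0 < k) {g : Fin n → ℤ}
    {a : κ → Fin n → ℤ} (ha : ∀ i, a i ∈ G) (hg : k • g = ∑ i, a i) {f : κ → ι}
    (hf : ∀ i, EquivExtremal (a i) (w (f i))) : Set.range f = (h.coord g).support := by
  classical
  ext j
  have hcoord : k • h.coord g j = ∑ i, h.coord (a i) j := by
    simpa only [map_nsmul, map_sum, Finsupp.smul_apply, Finsupp.finsetSum_apply] using
      congr(h.coord $hg j)
  have hzero : h.coord g j = 0 ↔ ∀ i, f i ≠ j := calc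
    h.coord g j = 0 ↔ ∑ i, h.coord (a i) j = 0 := by rw [← hcoord, smul_eq_zero_iff_right hk.ne']
    _ ↔ ∀ i, h.coord (a i) j = 0 := by
      simp [sum_eq_zero_iff_of_nonneg fun i _ ↦ h.coord_nonneg (ha i) j]
    _ ↔ ∀ i, f i ≠ j := forall_congr' fun i ↦ by
      rw [h.coord_eq_zero_iff_of_equivExtremal (hf i), coord_self]
      simp [Finsupp.single_apply]
  simp [hzero]

end Coord

theorem extremalElt (h : IsRayBasis G w) (i : ι) : ExtremalElt G (w i) := by
  refine ⟨h.mem i, h.linearIndependent.ne_zero i, ?_, ?_⟩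
  · rintro ⟨x, hx, hinv⟩
    have hcoord : 1 + h.coord x i = 0 := by simpa [coord_self] using congr(h.coord $hinv i)
    linarith [h.coord_nonneg hx i]
  · intro k _ a b ha hb hab
    have hcoord (j : ι) (hj : j ≠ i) : h.coord a j + h.coord b j = 0 := by
      simpa [-nsmul_eq_mul, coord_self, hj, eq_comm] using congr(h.coord $hab j)
    obtain ⟨s, q, hs, hsa⟩ := h.exists_nsmul_eq_nsmul ha (i := i) fun j hj ↦ by
      linarith [hcoord j hj, h.coord_nonneg ha j, h.coord_nonneg hb j]
    obtain ⟨t, p, ht, htb⟩ := h.exists_nsmul_eq_nsmul hb (i := i) fun j hj ↦ by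
      linarith [hcoord j hj, h.coord_nonneg ha j, h.coord_nonneg hb j]
    exact ⟨s, t, q, p, hs, ht, hsa, htb⟩

theorem exists_equivExtremal (h : IsRayBasis G w) {a : Fin n → ℤ}
    (ha : ExtremalElt G a) : ∃ i, EquivExtremal a (w i) := by
  classical
  have := h.finite
  have := Fintype.ofFinite ι
  obtain ⟨k, hk, hka⟩ := h.le_rootClosure ha.mem
  obtain ⟨c, hc⟩ := AddSubmonoid.mem_closure_range_iff_of_fintype.1 hka
  obtain ⟨i, -, hi⟩ : ∃ i ∈ univ, c i • w i ≠ 0 :=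
    exists_ne_zero_of_sum_ne_zero (hc ▸ (ha.nsmul hk).ne_zero)
  rw [← add_sum_erase _ _ (mem_univ i)] at hc
  have hequiv : EquivExtremal (c i • w i) a := ha.equivExtremal_of_nsmul_eq_add hk
    (nsmul_mem (h.mem i) _) (sum_mem fun j _ ↦ nsmul_mem (h.mem j) _) hc hi
  have hci : 0 < c i := Nat.pos_of_ne_zero fun h0 ↦ hi (by rw [h0, zero_smul])
  exact ⟨i, hequiv.symm.trans (.nsmul_left hci _)⟩

theorem exists_nsmul_eq_sum_extremalElt (h : IsRayBasis G w) {g : Fin n → ℤ}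
    (hg : g ∈ G) : ∃ k : ℕ, 0 < k ∧ ∃ (s : ℕ) (a : Fin s → Fin n → ℤ),
      (∀ i, ExtremalElt G (a i)) ∧ k • g = ∑ i, a i := by
  obtain ⟨k, hk, hkg⟩ := h.le_rootClosure hg
  obtain ⟨l, hl, hsum⟩ := AddSubmonoid.exists_list_of_mem_closure hkg
  refine ⟨k, hk, l.length, l.get, fun i ↦ ?_, by simp [← hsum]⟩
  obtain ⟨j, hj⟩ := hl _ (l.get_mem i)
  exact hj ▸ h.extremalElt j

theorem semiFactorial (h : IsRayBasis G w) : SemiFactorial G := by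
  refine fun g hg _ ↦ ⟨h.exists_nsmul_eq_sum_extremalElt hg, ?_⟩
  intro k k' hk hk' s t a b ha hb hane hbne hka hkb
  choose f hf using fun i ↦ h.exists_equivExtremal (ha i)
  choose f' hf' using fun j ↦ h.exists_equivExtremal (hb j)
  have hf_inj : Function.Injective f := fun i i' hii' ↦
    not_imp_not.1 (hane i i') ((hf i).trans (hii' ▸ (hf i').symm))
  have hf'_inj : Function.Injective f' := fun j j' hjj' ↦
    not_imp_not.1 (hbne j j') ((hf' j).trans (hjj' ▸ (hf' j').symm))
  obtain ⟨σ, hσ⟩ := exists_equiv_comp_eq_of_range_eq hf_inj hf'_inj <|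
    (h.range_eq_support_coord hk (fun i ↦ (ha i).mem) hka hf).trans
      (h.range_eq_support_coord hk' (fun j ↦ (hb j).mem) hkb hf').symm
  exact ⟨σ, fun i ↦ (hf i).trans (hσ i ▸ (hf' (σ i)).symm)⟩

end IsRayBasis

theorem semiFactorial_iff_exists_isRayBasis {n : ℕ} {G : AddSubmonoid (Fin n → ℤ)} :
    SemiFactorial G ↔ ∃ (m : ℕ) (w : Fin m → Fin n → ℤ), IsRayBasis G w :=
  ⟨SemiFactorial.exists_isRayBasis, fun ⟨_, _, hw⟩ ↦ hw.semiFactorial⟩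

section Hull

variable {R E ι : Type*} [Semiring R] [PartialOrder R] [IsOrderedRing R] [AddCommMonoid E]
  [Module R E]

theorem mem_hull_range_iff [Fintype ι] {v : ι → E} {x : E} :
    x ∈ hull R (Set.range v) ↔ ∃ c : ι → R, (∀ i, 0 ≤ c i) ∧ x = ∑ i, c i • v i := by
  rw [Submodule.mem_span_range_iff_exists_fun]
  constructor
  · rintro ⟨c, rfl⟩
    exact ⟨fun i ↦ c i, fun i ↦ (c i).2, rfl⟩
  · rintro ⟨c, hc, rfl⟩
    exact ⟨fun i ↦ ⟨c i, hc i⟩, rfl⟩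

theorem mem_hull_singleton_iff {v x : E} : x ∈ hull R {v} ↔ ∃ r : R, 0 ≤ r ∧ x = r • v := by
  rw [Submodule.mem_span_singleton]
  constructor
  · rintro ⟨r, rfl⟩
    exact ⟨r, r.2, rfl⟩
  · rintro ⟨r, hr, rfl⟩
    exact ⟨⟨r, hr⟩, rfl⟩

end Hull

section Cone

variable {K E ι : Type*} [Field K] [LinearOrder K] [IsStrictOrderedRing K] [AddCommGroup E]
  [Module K E]

theorem rootClosure_toAddSubmonoid_le (C : PointedCone K E) :
    rootClosure C.toAddSubmonoid ≤ C.toAddSubmonoid := by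
  rintro x ⟨k, hk, hkx⟩
  have hx := C.smul_mem (show (0 : K) ≤ (k : K)⁻¹ by positivity) hkx
  rwa [← Nat.cast_smul_eq_nsmul K, inv_smul_smul₀ (Nat.cast_ne_zero.2 hk.ne')] at hx

theorem isFaceOf_hull_singleton [Finite ι] {v : ι → E} (hv : LinearIndependent K v) (i : ι) :
    (hull K {v i}).IsFaceOf (hull K (Set.range v)) := by
  classical
  have := Fintype.ofFinite ι
  refine ⟨Submodule.span_mono (by simp), fun {x y a} hx hy ha hxy ↦ ?_⟩
  obtain ⟨c, hc, rfl⟩ := mem_hull_range_iff.1 hx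
  obtain ⟨d, hd, rfl⟩ := mem_hull_range_iff.1 hy
  obtain ⟨r, -, hr⟩ := mem_hull_singleton_iff.1 hxy
  have hcoord (j : ι) : a * c j + d j = (Pi.single i r : ι → K) j := by
    refine Fintype.linearIndependent_iffₛ.1 hv (fun j ↦ a * c j + d j) (Pi.single i r) ?_ j
    simpa [add_smul, sum_add_distrib, mul_smul, smul_sum, Pi.single_apply, ite_smul] using hr
  have hcj (j : ι) (hj : j ≠ i) : c j = 0 := by
    have := hcoord j
    rw [Pi.single_eq_of_ne hj] at this
    nlinarith [hc j, hd j]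
  rw [Fintype.sum_eq_single i fun j hj ↦ by rw [hcj j hj, zero_smul]]
  exact mem_hull_singleton_iff.2 ⟨c i, hc i, rfl⟩

theorem exists_mem_ne_zero_of_isFaceOf_hull {s : Set E} {F : PointedCone K E}
    (hF : F.IsFaceOf (hull K s)) {x : E} (hx : x ∈ F) (hx0 : x ≠ 0) :
    ∃ u ∈ s, u ∈ F ∧ u ≠ 0 := by
  obtain ⟨m, c, u, rfl⟩ := Submodule.mem_span_set'.1 (hF.le hx)
  obtain ⟨l, -, hl⟩ := exists_ne_zero_of_sum_ne_zero hx0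
  have hcl : 0 < (c l : K) := (c l).2.lt_of_ne fun h0 ↦ hl (by
    rw [show c l = 0 from Subtype.ext h0.symm, zero_smul])
  refine ⟨u l, (u l).2, ?_, fun h0 ↦ hl (by rw [h0, smul_zero])⟩
  exact hF.mem_of_sum_smul_mem (c := fun l ↦ (c l : K)) (fun l ↦ subset_hull (u l).2)
    (fun l ↦ (c l).2) hx l hcl

end Cone

section Descent

variable {ι κ : Type*} [Finite κ]

theorem exists_smul_eq_sum_smul_of_algebraMap_mem_span {R : Type*} (K : Type*) [CommRing R]
    [Field K] [Algebra R K] [FaithfulSMul R K] [Fintype ι] {w : ι → κ → R}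
    (hw : LinearIndependent R w) {g : κ → R}
    (hg : Pi.algebraMap κ R K g ∈ Submodule.span K (Set.range (Pi.algebraMap κ R K ∘ w))) :
    ∃ d : R, d ≠ 0 ∧ ∃ z : ι → R, d • g = ∑ i, z i • w i := by
  have hdep : ¬ LinearIndependent R (fun o : Option ι ↦ o.elim g w) := by
    rw [← linearIndependent_piAlgebraMap_comp_iff (S := K), linearIndependent_option]
    exact fun h ↦ h.2 hg
  obtain ⟨z, hz, hz0⟩ := Fintype.not_linearIndependent_iff.1 hdep
  rw [Fintype.sum_option] at hz
  refine ⟨z none, fun hd ↦ ?_, fun i ↦ -z (some i), ?_⟩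
  · have hzero := Fintype.linearIndependent_iff.1 hw (fun i ↦ z (some i)) (by simpa [hd] using hz)
    obtain ⟨_ | i, hi⟩ := hz0
    exacts [hi hd, hi (hzero i)]
  · simpa [eq_neg_iff_add_eq_zero] using hz

theorem mem_rootClosure_of_mem_hull (K : Type*) [Field K] [LinearOrder K] [IsStrictOrderedRing K]
    [Finite ι] {w : ι → κ → ℤ} (hw : LinearIndependent ℤ w) {g : κ → ℤ}
    (hg : Pi.algebraMap κ ℤ K g ∈ hull K (Set.range (Pi.algebraMap κ ℤ K ∘ w))) :
    g ∈ rootClosure (AddSubmonoid.closure (Set.range w)) := by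
  have := Fintype.ofFinite ι
  obtain ⟨d, hd, z, hz⟩ := exists_smul_eq_sum_smul_of_algebraMap_mem_span K hw
    (hull_le_span _ _ hg)
  obtain ⟨c, hc, hgc⟩ := mem_hull_range_iff.1 hg
  have hdc (i : ι) : (d : K) * c i = z i := by
    have hzK := congr(Pi.algebraMap κ ℤ K $hz)
    simp only [map_sum, map_zsmul, hgc, ← Int.cast_smul_eq_zsmul K, smul_sum, smul_smul] at hzK
    exact Fintype.linearIndependent_iffₛ.1 (linearIndependent_piAlgebraMap_comp_iff.2 hw)
      (fun i ↦ (d : K) * c i) (fun i ↦ (z i : K)) hzK i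
  have habs (i : ι) : (d.natAbs : K) * c i = (z i).natAbs := by
    simp only [Nat.cast_natAbs, Int.cast_abs, ← hdc, abs_mul, abs_of_nonneg (hc i)]
  have hinj : Function.Injective (Pi.algebraMap κ ℤ K) :=
    fun x y hxy ↦ funext fun j ↦ Int.cast_injective (congr_fun hxy j)
  refine ⟨d.natAbs, Int.natAbs_pos.2 hd, AddSubmonoid.mem_closure_range_iff_of_fintype.2
    ⟨fun i ↦ (z i).natAbs, hinj ?_⟩⟩
  simp only [map_sum, map_nsmul, hgc, ← Nat.cast_smul_eq_nsmul K, smul_sum, smul_smul, habs,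
    Function.comp_apply]

end Descent

section Simplicial

variable {n : ℕ} {G : AddSubmonoid (Fin n → ℤ)}

theorem coneOf_eq_hull (G : AddSubmonoid (Fin n → ℤ)) :
    coneOf G = hull ℝ (Pi.algebraMap (Fin n) ℤ ℝ '' G) := by
  ext x
  constructor
  · rintro ⟨m, c, v, hc, hv, rfl⟩
    exact sum_mem fun i _ ↦
      PointedCone.smul_mem _ (hc i) (subset_hull (Set.mem_image_of_mem _ (hv i)))
  · intro hx
    obtain ⟨m, c, u, rfl⟩ := Submodule.mem_span_set'.1 hx
    choose v hv huv using fun i ↦ (u i).2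
    exact ⟨m, fun i ↦ c i, v, fun i ↦ (c i).2, hv, sum_congr rfl fun i _ ↦ by rw [← huv i]; rfl⟩

theorem isSimplicialCone_iff_exists_eq_hull {C : Set (Fin n → ℝ)} :
    IsSimplicialCone C ↔
      ∃ (m : ℕ) (v : Fin m → Fin n → ℝ), LinearIndependent ℝ v ∧ C = hull ℝ (Set.range v) := by
  have hull_eq {m : ℕ} (v : Fin m → Fin n → ℝ) : (hull ℝ (Set.range v) : Set (Fin n → ℝ)) =
      {x | ∃ c : Fin m → ℝ, (∀ i, 0 ≤ c i) ∧ x = ∑ i, c i • v i} :=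
    Set.ext fun _ ↦ mem_hull_range_iff
  simp only [IsSimplicialCone, hull_eq]

theorem IsRayBasis.coneOf_eq_hull_range {ι : Type*} {w : ι → Fin n → ℤ} (h : IsRayBasis G w) :
    coneOf G = hull ℝ (Set.range (Pi.algebraMap (Fin n) ℤ ℝ ∘ w)) := by
  set C := hull ℝ (Set.range (Pi.algebraMap (Fin n) ℤ ℝ ∘ w))
  have hclosure : AddSubmonoid.closure (Set.range w) ≤
      C.toAddSubmonoid.comap (Pi.algebraMap (Fin n) ℤ ℝ) := by
    rw [AddSubmonoid.closure_le]
    rintro _ ⟨i, rfl⟩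
    exact subset_hull (Set.mem_range_self i)
  rw [coneOf_eq_hull, SetLike.coe_set_eq]
  refine le_antisymm (Submodule.span_le.2 ?_) (Submodule.span_mono ?_)
  · rintro _ ⟨g, hg, rfl⟩
    obtain ⟨k, hk, hkg⟩ := h.le_rootClosure hg
    exact rootClosure_toAddSubmonoid_le C ⟨k, hk, by rw [← map_nsmul]; exact hclosure hkg⟩
  · rintro _ ⟨i, rfl⟩
    exact Set.mem_image_of_mem _ (h.mem i)

theorem exists_mem_algebraMap_eq_smul {ι : Type*} [Finite ι] {v : ι → Fin n → ℝ}
    (hv : LinearIndependent ℝ v) (hG : coneOf G = hull ℝ (Set.range v)) (i : ι) :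
    ∃ g ∈ G, ∃ r : ℝ, 0 < r ∧ Pi.algebraMap (Fin n) ℤ ℝ g = r • v i := by
  have hface := isFaceOf_hull_singleton hv i
  rw [← SetLike.coe_set_eq.1 ((coneOf_eq_hull G).symm.trans hG)] at hface
  obtain ⟨_, ⟨g, hg, rfl⟩, hmem, hne⟩ :=
    exists_mem_ne_zero_of_isFaceOf_hull hface (subset_hull (Set.mem_singleton _)) (hv.ne_zero i)
  obtain ⟨r, hr, hgr⟩ := mem_hull_singleton_iff.1 hmem
  exact ⟨g, hg, r, hr.lt_of_ne fun h0 ↦ hne (by rw [hgr, ← h0, zero_smul]), hgr⟩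

theorem exists_isRayBasis_of_coneOf_eq_hull {ι : Type*} [Finite ι] {v : ι → Fin n → ℝ}
    (hv : LinearIndependent ℝ v) (hG : coneOf G = hull ℝ (Set.range v)) :
    ∃ w : ι → Fin n → ℤ, IsRayBasis G w := by
  choose w hwG r hr hwr using exists_mem_algebraMap_eq_smul hv hG
  have hlin : LinearIndependent ℤ w := by
    rw [← linearIndependent_piAlgebraMap_comp_iff (S := ℝ),
      show _ ∘ w = fun i ↦ r i • v i from funext hwr]
    exact hv.units_smul fun i ↦ Units.mk0 (r i) (hr i).ne'
  have hull_le : hull ℝ (Set.range v) ≤ hull ℝ (Set.range (Pi.algebraMap (Fin n) ℤ ℝ ∘ w)) := by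
    refine Submodule.span_le.2 ?_
    rintro _ ⟨i, rfl⟩
    rw [← inv_smul_smul₀ (hr i).ne' (v i), ← hwr i]
    exact PointedCone.smul_mem _ (inv_nonneg.2 (hr i).le) (subset_hull (Set.mem_range_self i))
  refine ⟨w, hwG, hlin, fun g hg ↦ mem_rootClosure_of_mem_hull ℝ hlin (hull_le ?_)⟩
  rw [← SetLike.mem_coe, ← hG, coneOf_eq_hull]
  exact subset_hull (Set.mem_image_of_mem _ hg)

theorem isSimplicialCone_coneOf_iff_exists_isRayBasis :
    IsSimplicialCone (coneOf G) ↔ ∃ (m : ℕ) (w : Fin m → Fin n → ℤ), IsRayBasis G w := by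
  rw [isSimplicialCone_iff_exists_eq_hull]
  constructor
  · rintro ⟨m, v, hv, hG⟩
    exact ⟨m, exists_isRayBasis_of_coneOf_eq_hull hv hG⟩
  · rintro ⟨m, w, hw⟩
    exact ⟨m, _, linearIndependent_piAlgebraMap_comp_iff.2 hw.linearIndependent,
      hw.coneOf_eq_hull_range⟩

end Simplicial

/-- An additive submonoid `G` of `ℤⁿ` (`n ≥ 1`) is semi-factorial if
and only if the convex cone it generates in `ℝⁿ` is simplicial. -/
theorem semiFactorial_iff_simplicial (n : ℕ) (hn : 1 ≤ n)
    (G : AddSubmonoid (Fin n → ℤ)) :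
    SemiFactorial G ↔ IsSimplicialCone (coneOf G) :=
  semiFactorial_iff_exists_isRayBasis.trans isSimplicialCone_coneOf_iff_exists_isRayBasis.symm
end
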